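/- In the permuted-fold hash model with n = k·m (k ≥ 1 an integer) and n ≥ 2, for any x ∈ ℝⁿ the variance (over the random permutation π and the i.i.d. signs g) of the RPS estimator of the squared norm is Var[⟨x̂,x̂⟩_RPS] = (2/m)·((n−m)/(n−1))·∑_{i≠j} x_i² x_j². -/

import Mathlib

open Finset

/-!
Off the diagonal, the products `g i * g j` of independent signs are centred, and uncorrelated apart
from the coincidence of `(i, j)` with `(j, i)`. Hence the estimator has mean `⟨x, y⟩` for every
fixed hash, and its variance is a sum over the colliding pairs `i ≠ j`; averaging over the hash
replaces collisions by collision probabilities.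

If the hash is a fixed map precomposed with a uniformly random element of a doubly transitive group,
the image of any pair `i ≠ j` is a uniformly random pair of distinct points. The collision
probability is then the same for all pairs, and counting in fibres of common size `k` shows that it
is `(k - 1) / (n - 1)`.
-/

open scoped BigOperators

section OffDiagonalSums

variable {ι M : Type*} [Fintype ι] [AddCommMonoid M]

lemma sum_offDiag_univ [DecidableEq ι] (F : ι → ι → M) :
    ∑ p ∈ univ.offDiag, F p.1 p.2 = ∑ i, ∑ j ∈ univ \ {i}, F i j :=
  sum_finset_product _ _ _ fun p => by simp [eq_comm]

lemma sum_sum_eq_sum_diag_add_sum_offDiag (F : ι → ι → M) :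
    ∑ i, ∑ j, F i j = ∑ i, F i i + ∑ p ∈ univ.offDiag, F p.1 p.2 := by
  classical
  rw [sum_offDiag_univ, ← sum_add_distrib]
  refine sum_congr rfl fun i _ => ?_
  rw [sdiff_singleton_eq_erase, add_sum_erase _ _ (mem_univ i)]

end OffDiagonalSums

section RandomSigns

variable {ι R : Type*}

/-- The sign `±1` encoded by a Boolean, `true` standing for `+1`; a vector of independent uniform
signs is a uniformly distributed `s : ι → Bool`. -/
def boolSign [One R] [Neg R] (b : Bool) : R := if b then 1 else -1

lemma boolSign_not [Ring R] (b : Bool) : (boolSign (!b) : R) = -boolSign b := by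
  cases b <;> simp [boolSign]

lemma boolSign_mul_self [Ring R] (b : Bool) : (boolSign b * boolSign b : R) = 1 := by
  cases b <;> simp [boolSign]

variable [Fintype ι] [DecidableEq ι]

lemma expect_eq_zero_of_update_not_eq_neg {M : Type*} [AddCommGroup M] [Module ℚ≥0 M] (i : ι)
    {F : (ι → Bool) → M} (hF : ∀ s, F (Function.update s i (!s i)) = -F s) : 𝔼 s, F s = 0 := by
  have hsum : ∑ s, F s = 0 :=
    sum_involution (fun s _ => Function.update s i (!s i)) (fun s _ => by simp [hF])
      (fun s _ _ hs => by simpa using congrFun hs i) (by simp) (by simp)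
  rw [expect_univ, hsum, smul_zero]

lemma expect_boolSign_mul_boolSign [Ring R] [Module ℚ≥0 R] (i j : ι) :
    𝔼 s : ι → Bool, (boolSign (s i) * boolSign (s j) : R) = if i = j then 1 else 0 := by
  split_ifs with hij
  · simp [hij, boolSign_mul_self]
  · exact expect_eq_zero_of_update_not_eq_neg i fun s => by
      simp [Function.update_of_ne (Ne.symm hij), boolSign_not]

variable [CommRing R] [Module ℚ≥0 R]

lemma expect_boolSign_pair_mul_boolSign_pair {p q : ι × ι} (hp : p.1 ≠ p.2) (hq : q.1 ≠ q.2) :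
    𝔼 s : ι → Bool,
        (boolSign (s p.1) * boolSign (s p.2) * (boolSign (s q.1) * boolSign (s q.2)) : R)
      = (if q = p then 1 else 0) + if q = p.swap then 1 else 0 := by
  obtain ⟨i, j⟩ := p
  obtain ⟨k, l⟩ := q
  dsimp only at hp hq
  have hcancel : ∀ a b c, 𝔼 s : ι → Bool,
      (boolSign (s a) * boolSign (s b) * (boolSign (s a) * boolSign (s c)) : R)
        = if c = b then 1 else 0 := fun a b c => by
    rw [← expect_boolSign_mul_boolSign]
    refine expect_congr rfl fun s _ => ?_
    linear_combination (boolSign (s c) * boolSign (s b)) * boolSign_mul_self (R := R) (s a)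
  by_cases hki : k = i
  · subst hki
    simp [hcancel, hp]
  by_cases hkj : k = j
  · subst hkj
    have hcomm : ∀ s : ι → Bool,
        (boolSign (s i) * boolSign (s k) : R) = boolSign (s k) * boolSign (s i) :=
      fun s => mul_comm _ _
    simp [hcomm, hcancel, hki]
  · have hzero : 𝔼 s : ι → Bool,
        (boolSign (s i) * boolSign (s j) * (boolSign (s k) * boolSign (s l)) : R) = 0 :=
      expect_eq_zero_of_update_not_eq_neg k fun s => by
        simp [Function.update_of_ne (Ne.symm hki), Function.update_of_ne (Ne.symm hkj),
          Function.update_of_ne (Ne.symm hq), boolSign_not]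
    simp [hzero, hki, hkj]

variable [SMulCommClass ℚ≥0 R R]

lemma expect_sum_offDiag_mul_boolSign (A : ι × ι → R) :
    𝔼 s : ι → Bool, ∑ p ∈ univ.offDiag, A p * (boolSign (s p.1) * boolSign (s p.2)) = 0 := by
  rw [expect_sum_comm]
  refine sum_eq_zero fun p hp => ?_
  rw [← mul_expect, expect_boolSign_mul_boolSign, if_neg (mem_offDiag.1 hp).2.2, mul_zero]

lemma expect_sum_offDiag_mul_boolSign_sq (A : ι × ι → R) :
    𝔼 s : ι → Bool, (∑ p ∈ univ.offDiag, A p * (boolSign (s p.1) * boolSign (s p.2))) ^ 2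
      = ∑ p ∈ univ.offDiag, A p * (A p + A p.swap) := by
  simp only [sq, sum_mul_sum, expect_sum_comm, mul_mul_mul_comm (A _), ← mul_expect]
  refine sum_congr rfl fun p hp => ?_
  have hpair : ∀ q ∈ univ.offDiag,
      A p * A q * 𝔼 s : ι → Bool,
          boolSign (s p.1) * boolSign (s p.2) * (boolSign (s q.1) * boolSign (s q.2))
        = A p * ((if q = p then A q else 0) + if q = p.swap then A q else 0) := fun q hq => by
    rw [expect_boolSign_pair_mul_boolSign_pair (mem_offDiag.1 hp).2.2 (mem_offDiag.1 hq).2.2,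
      mul_assoc, mul_add, mul_ite, mul_ite, mul_one, mul_zero]
  have hswap : p.swap ∈ univ.offDiag := by simpa [eq_comm] using hp
  rw [sum_congr rfl hpair, ← mul_sum, sum_add_distrib, sum_ite_eq_of_mem' _ _ _ hp,
    sum_ite_eq_of_mem' _ _ _ hswap]

end RandomSigns

section Estimator

variable {Ω ι κ R : Type*} [Fintype Ω] [Fintype ι] [DecidableEq κ] [CommRing R]

/-- The randomized-parameter-sharing estimator of the inner product of `x` and `y`, for the hash
function `h` and the signs encoded by `s`. -/
def rpsEstimator (x y : ι → R) (h : ι → κ) (s : ι → Bool) : R :=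
  ∑ i, ∑ j, x i * y j * boolSign (s i) * boolSign (s j) * if h i = h j then 1 else 0

lemma rpsEstimator_eq_dotProduct_add (x y : ι → R) (h : ι → κ) (s : ι → Bool) :
    rpsEstimator x y h s = x ⬝ᵥ y + ∑ p ∈ univ.offDiag,
      (if h p.1 = h p.2 then x p.1 * y p.2 else 0) * (boolSign (s p.1) * boolSign (s p.2)) := by
  rw [rpsEstimator, sum_sum_eq_sum_diag_add_sum_offDiag]
  congr 1
  · refine sum_congr rfl fun i _ => ?_
    rw [if_pos rfl, mul_one, mul_assoc, boolSign_mul_self, mul_one]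
  · refine sum_congr rfl fun p _ => ?_
    split_ifs <;> ring

variable [Algebra ℚ≥0 R]

/-- The variance of a random variable on a finite sample space with the uniform distribution,
valued in a commutative `ℚ≥0`-algebra (squares are taken without conjugation). -/
def uniformVariance (X : Ω → R) : R := 𝔼 ω, (X ω - 𝔼 ω', X ω') ^ 2

lemma uniformVariance_prod {Ω' 𝕜 : Type*} [Fintype Ω'] [Field 𝕜] [CharZero 𝕜] (X : Ω × Ω' → 𝕜) :
    uniformVariance X =
      (∑ a, ∑ b, (X (a, b) - (∑ a', ∑ b', X (a', b')) / (Fintype.card Ω * Fintype.card Ω')) ^ 2)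
        / (Fintype.card Ω * Fintype.card Ω') := by
  simp only [uniformVariance, Fintype.expect_eq_sum_div_card, Fintype.sum_prod_type,
    Fintype.card_prod, Nat.cast_mul]

variable [DecidableEq ι]

lemma expect_rpsEstimator (x y : ι → R) (h : ι → κ) : 𝔼 s, rpsEstimator x y h s = x ⬝ᵥ y := by
  simp only [rpsEstimator_eq_dotProduct_add, expect_add_distrib, expect_sum_offDiag_mul_boolSign,
    Fintype.expect_const, add_zero]

lemma expect_rpsEstimator_sub_dotProduct_sq (x y : ι → R) (h : ι → κ) :
    𝔼 s, (rpsEstimator x y h s - x ⬝ᵥ y) ^ 2 = ∑ p ∈ univ.offDiag,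
      (if h p.1 = h p.2 then 1 else 0) *
        (x p.1 ^ 2 * y p.2 ^ 2 + x p.1 * y p.1 * (x p.2 * y p.2)) := by
  simp only [rpsEstimator_eq_dotProduct_add, add_sub_cancel_left,
    expect_sum_offDiag_mul_boolSign_sq]
  refine sum_congr rfl fun p _ => ?_
  simp only [Prod.fst_swap, Prod.snd_swap, eq_comm (a := h p.2)]
  split_ifs <;> ring

lemma uniformVariance_rpsEstimator [Nonempty Ω] (x y : ι → R) (H : Ω → ι → κ) :
    uniformVariance (fun ω : Ω × (ι → Bool) => rpsEstimator x y (H ω.1) ω.2) =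
      ∑ p ∈ univ.offDiag, (𝔼 ω, if H ω p.1 = H ω p.2 then 1 else 0) *
        (x p.1 ^ 2 * y p.2 ^ 2 + x p.1 * y p.1 * (x p.2 * y p.2)) := by
  have hmean : 𝔼 ω : Ω × (ι → Bool), rpsEstimator x y (H ω.1) ω.2 = x ⬝ᵥ y := by
    rw [← univ_product_univ, expect_product]
    simp only [expect_rpsEstimator, Fintype.expect_const]
  rw [uniformVariance, hmean, ← univ_product_univ, expect_product]
  simp only [expect_rpsEstimator_sub_dotProduct_sq, expect_sum_comm, expect_mul]

end Estimator

section Collisions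

variable {ι κ : Type*} [Fintype ι]

-- Translating the group variable shows that the average does not depend on the pair `(i, j)`, so
-- it may also be averaged over all pairs.
lemma expect_smul_pair_eq_expect_offDiag {G M : Type*} [Group G] [Fintype G] [MulAction G ι]
    [MulAction.IsMultiplyPretransitive G ι 2] [AddCommMonoid M] [Module ℚ≥0 M]
    (F : ι × ι → M) {i j : ι} (hij : i ≠ j) :
    𝔼 g : G, F (g • i, g • j) = 𝔼 p ∈ univ.offDiag, F p := by
  have hconst : ∀ p ∈ univ.offDiag, 𝔼 g : G, F (g • p) = 𝔼 g : G, F (g • i, g • j) := by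
    intro p hp
    obtain ⟨τ, hi, hj⟩ := MulAction.is_two_pretransitive_iff.1
      ‹MulAction.IsMultiplyPretransitive G ι 2› hij (mem_offDiag.1 hp).2.2
    refine Fintype.expect_equiv (Equiv.mulRight τ) _ _ fun g => ?_
    simp [mul_smul, hi, hj, Prod.smul_def]
  have hinv : ∀ g : G, 𝔼 p ∈ univ.offDiag, F (g • p) = 𝔼 p ∈ univ.offDiag, F p := fun g =>
    expect_equiv (MulAction.toPerm g) (fun p => by simp) fun p _ => rfl
  calc 𝔼 g : G, F (g • i, g • j)
      = 𝔼 p ∈ univ.offDiag, 𝔼 g : G, F (g • p) := by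
        rw [expect_congr rfl hconst, expect_const ⟨(i, j), by simpa using hij⟩]
    _ = 𝔼 g : G, 𝔼 p ∈ univ.offDiag, F (g • p) := expect_comm _ _ _
    _ = 𝔼 p ∈ univ.offDiag, F p := by simp only [hinv, Fintype.expect_const]

variable [DecidableEq κ] {f : ι → κ} {k : ℕ}

lemma sum_offDiag_collision_of_card_fiber {R : Type*} [Ring R] (hf : ∀ i, #{j | f i = f j} = k) :
    ∑ p ∈ univ.offDiag, (if f p.1 = f p.2 then (1 : R) else 0) = Fintype.card ι * (k - 1) := by
  have htotal : ∑ i, ∑ j, (if f i = f j then (1 : R) else 0) = Fintype.card ι * k := by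
    simp [hf]
  rw [sum_sum_eq_sum_diag_add_sum_offDiag] at htotal
  rw [mul_sub, ← htotal]
  simp

lemma expect_offDiag_collision_of_card_fiber [Nonempty ι] {𝕜 : Type*} [Field 𝕜] [CharZero 𝕜]
    (hf : ∀ i, #{j | f i = f j} = k) :
    𝔼 p ∈ univ.offDiag, (if f p.1 = f p.2 then (1 : 𝕜) else 0)
      = (k - 1) / (Fintype.card ι - 1) := by
  have hcard : (#(univ : Finset ι).offDiag : 𝕜) = Fintype.card ι * (Fintype.card ι - 1) := by
    rw [offDiag_card, card_univ, Nat.cast_sub (Nat.le_mul_self _), Nat.cast_mul, mul_sub_one]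
  rw [expect_eq_sum_div_card, sum_offDiag_collision_of_card_fiber hf, hcard,
    mul_div_mul_left _ _ (Nat.cast_ne_zero.2 Fintype.card_ne_zero)]

lemma card_filter_fin_eq_count (p : ℕ → Prop) [DecidablePred p] (n : ℕ) :
    #{j : Fin n | p j} = n.count p := by
  rw [card_filter, Fin.sum_univ_eq_sum_range (fun j => if p j then 1 else 0), ← card_filter,
    Nat.count_eq_card_filter_range]

lemma card_filter_mod_eq_mod {m : ℕ} (i : Fin (k * m)) :
    #{j : Fin (k * m) | (i : ℕ) % m = j % m} = k := by
  have hm : 0 < m := Nat.pos_of_mul_pos_left (Nat.zero_lt_of_lt i.isLt)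
  calc #{j : Fin (k * m) | (i : ℕ) % m = j % m}
      = (k * m).count (· ≡ i [MOD m]) := by
        rw [← card_filter_fin_eq_count]
        simp only [Nat.ModEq, eq_comm]
    _ = k := by simp [Nat.count_modEq_card _ hm, hm]

end Collisions

theorem rps_norm_estimator_variance_general {ι κ G 𝕜 : Type*} [Fintype ι] [DecidableEq ι]
    [DecidableEq κ] [Group G] [Fintype G] [MulAction G ι] [MulAction.IsMultiplyPretransitive G ι 2]
    [Field 𝕜] [CharZero 𝕜] {k m : ℕ} (hkm : Fintype.card ι = k * m) {f : ι → κ}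
    (hf : ∀ i, #{j | f i = f j} = k) (x y : ι → 𝕜) :
    uniformVariance (fun ω : G × (ι → Bool) => rpsEstimator x y (fun i => f (ω.1 • i)) ω.2) =
      1 / (m : 𝕜) * ((Fintype.card ι - m) / (Fintype.card ι - 1)) *
        ∑ i, ∑ j ∈ univ \ {i}, (x i ^ 2 * y j ^ 2 + x i * y i * (x j * y j)) := by
  rw [uniformVariance_rpsEstimator x y fun (g : G) i => f (g • i), ← sum_offDiag_univ, mul_sum]
  refine sum_congr rfl fun p hp => ?_
  have : Nonempty ι := ⟨p.1⟩
  have hm : (m : 𝕜) ≠ 0 := Nat.cast_ne_zero.2 <| by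
    rintro rfl
    exact Fintype.card_ne_zero hkm
  have hcollision : 𝔼 g : G, (if f (g • p.1) = f (g • p.2) then (1 : 𝕜) else 0)
      = (k - 1) / (Fintype.card ι - 1) := by
    rw [expect_smul_pair_eq_expect_offDiag (fun q => if f q.1 = f q.2 then (1 : 𝕜) else 0)
      (mem_offDiag.1 hp).2.2, expect_offDiag_collision_of_card_fiber hf]
  have hratio : (k : 𝕜) - 1 = (Fintype.card ι - m) / m := by
    rw [hkm, Nat.cast_mul, sub_div, mul_div_cancel_right₀ _ hm, div_self hm]
  rw [hcollision, hratio]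
  ring

/-- Variance of the RPS squared-norm estimator in the permuted-fold hash model with
`n = k·m` (`k ≥ 1`), `n ≥ 2`: the variance over the uniformly random permutation `π`
(giving the hash `h(i) = π(i) mod m`) and the i.i.d. uniform signs `g` equals
`(2/m)·((n−m)/(n−1))·∑_{i≠j} x_i² x_j²`. -/
theorem rps_norm_estimator_variance (n m k : ℕ) (hk : 1 ≤ k) (hnm : n = k * m) (hn : 2 ≤ n)
    (x : Fin n → ℝ) :
    (let sgn : (Fin n → Bool) → Fin n → ℝ := fun s i => if s i then 1 else -1
     let est : Equiv.Perm (Fin n) → (Fin n → Bool) → ℝ := fun π s =>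
       ∑ i, ∑ i', x i * x i' * sgn s i * sgn s i' *
         (if (π i : ℕ) % m = (π i' : ℕ) % m then (1 : ℝ) else 0)
     let N : ℝ := (Fintype.card (Equiv.Perm (Fin n)) : ℝ) * (2 : ℝ) ^ n
     let μ : ℝ := (∑ π : Equiv.Perm (Fin n), ∑ s : Fin n → Bool, est π s) / N
     (∑ π : Equiv.Perm (Fin n), ∑ s : Fin n → Bool, (est π s - μ) ^ 2) / N)
      = ((2 : ℝ) / (m : ℝ)) * (((n : ℝ) - (m : ℝ)) / ((n : ℝ) - 1)) *
          ∑ i, ∑ j ∈ Finset.univ \ {i}, (x i) ^ 2 * (x j) ^ 2 := by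
  subst hnm
  have : MulAction.IsMultiplyPretransitive (Equiv.Perm (Fin (k * m))) (Fin (k * m)) 2 :=
    Equiv.Perm.isMultiplyPretransitive _ 2
  have hvar := rps_norm_estimator_variance_general (G := Equiv.Perm (Fin (k * m)))
    (Fintype.card_fin _) card_filter_mod_eq_mod x x
  rw [uniformVariance_prod] at hvar
  simp only [Fintype.card_fun, Fintype.card_fin, Fintype.card_bool, Nat.cast_pow,
    Nat.cast_ofNat] at hvar
  refine hvar.trans ?_
  simp only [mul_sum]
  refine sum_congr rfl fun i _ => sum_congr rfl fun j _ => ?_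
  ring
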